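/- arXiv:2203.07317 — 2 statements merged into one kernel-verified Lean document; each statement's English description precedes it below -/
import Mathlib

section
/- Fix an integer r ≥ 2 and ε, D > 0. Then there exists N₀ such that for all N ≥ N₀, all integers d with 1 ≤ d ≤ N/2 and dN even, and every index i ∈ {1,…,N}, the uniform random d-regular graph satisfies ℙ( ∑_{j=1}^N |(𝒜^r)_{ij} − d^r N^{−1}| ≥ N^ε d^{r−1} √N ) ≤ N^{−D}. -/
open MeasureTheory Filter Matrix
open scoped ENNReal NNReal

noncomputable section

/-- `A` is the adjacency matrix of a `d`-regular graph on `N` vertices: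
a symmetric `{0,1}`-matrix with zero diagonal and all row sums equal to `d`. -/
def IsAdjMat (N d : ℕ) (A : Matrix (Fin N) (Fin N) ℝ) : Prop :=
  A.IsSymm ∧ (∀ i, A i i = 0) ∧ (∀ i j, A i j = 0 ∨ A i j = 1) ∧ ∀ i, ∑ j, A i j = d

/-- probability of an event under the uniform measure on `d`-regular graphs on `N` vertices. -/
def PrReg (N d : ℕ) (E : Matrix (Fin N) (Fin N) ℝ → Prop) : ℝ :=
  (Nat.card {A : Matrix (Fin N) (Fin N) ℝ // IsAdjMat N d A ∧ E A} : ℝ) /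
    (Nat.card {A : Matrix (Fin N) (Fin N) ℝ // IsAdjMat N d A} : ℝ)

/-- expectation of `F` under the uniform measure on `d`-regular graphs on `N` vertices. -/
def Ereg (N d : ℕ) (F : Matrix (Fin N) (Fin N) ℝ → ℝ) : ℝ :=
  (∑ᶠ A : {A : Matrix (Fin N) (Fin N) ℝ // IsAdjMat N d A}, F A.1) /
    (Nat.card {A : Matrix (Fin N) (Fin N) ℝ // IsAdjMat N d A} : ℝ)

/-- the `k`-th largest eigenvalue (`1`-based indexing) of a symmetric matrix. -/
def eigval {N : ℕ} (A : Matrix (Fin N) (Fin N) ℝ) (k : ℕ) : ℝ :=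
  if hA : A.IsHermitian then
    if h : k - 1 < N then
      hA.eigenvalues (Tuple.sort hA.eigenvalues (Fin.rev ⟨k - 1, h⟩))
    else 0
  else 0

/-- `q = √(d(N-d)/N)`. -/
def qval (N d : ℕ) : ℝ := Real.sqrt ((d : ℝ) * ((N : ℝ) - (d : ℝ)) / (N : ℝ))

/-- the projection `P⊥ = I - e eᵀ` (complex version). -/
def Pperp (N : ℕ) : Matrix (Fin N) (Fin N) ℂ := 1 - Matrix.of fun _ _ => (N : ℂ)⁻¹

/-- the projection `P⊥ = I - e eᵀ` (real version). -/
def PperpR (N : ℕ) : Matrix (Fin N) (Fin N) ℝ := 1 - Matrix.of fun _ _ => (N : ℝ)⁻¹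

/-- the Green function `G(z) = P⊥ (q⁻¹𝒜 - z)⁻¹ P⊥`. -/
def greenM (N d : ℕ) (A : Matrix (Fin N) (Fin N) ℝ) (z : ℂ) : Matrix (Fin N) (Fin N) ℂ :=
  Pperp N * (((qval N d : ℝ) : ℂ)⁻¹ • A.map Complex.ofReal - z • 1)⁻¹ * Pperp N

/-- the normalized trace `Ḡ(z) = N⁻¹ Tr G(z)`. -/
def gbar (N d : ℕ) (A : Matrix (Fin N) (Fin N) ℝ) (z : ℂ) : ℂ :=
  (N : ℂ)⁻¹ * (greenM N d A z).trace

/-- the Stieltjes transform of the semicircle density `ϱ(x) = (2π)⁻¹ √((4-x²)₊)`. -/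
def mSC (z : ℂ) : ℂ :=
  ∫ x in (-2 : ℝ)..2, ((Real.sqrt (4 - x ^ 2) / (2 * Real.pi) : ℝ) : ℂ) / ((x : ℂ) - z)

/-- `(Δ_{ij})_{xy} = δ_{ix}δ_{jy} + δ_{iy}δ_{jx}`. -/
def Dmat (N : ℕ) (i j : Fin N) : Matrix (Fin N) (Fin N) ℝ :=
  Matrix.of fun x y =>
    (if i = x ∧ j = y then (1 : ℝ) else 0) + (if i = y ∧ j = x then (1 : ℝ) else 0)

/-- `ξ_{ij}^{kl} = Δ_{ij} + Δ_{kl} - Δ_{ik} - Δ_{jl}`. -/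
def xiMat (N : ℕ) (i j k l : Fin N) : Matrix (Fin N) (Fin N) ℝ :=
  Dmat N i j + Dmat N k l - Dmat N i k - Dmat N j l

/-- `χ_{ij}^{kl}(𝒜) = 𝒜_{ij}(1-𝒜_{ik})𝒜_{kl}(1-𝒜_{jl})`. -/
def chi (N : ℕ) (A : Matrix (Fin N) (Fin N) ℝ) (i j k l : Fin N) : ℝ :=
  A i j * (1 - A i k) * A k l * (1 - A j l)

/-- `𝓜_{ij}(F(𝒜)) = max_{k,l} |F(𝒜 + ξ_{ij}^{kl})|`. -/
def Mmax (N : ℕ) (i j : Fin N) (F : Matrix (Fin N) (Fin N) ℝ → ℝ)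
    (A : Matrix (Fin N) (Fin N) ℝ) : ℝ :=
  ⨆ p : Fin N × Fin N, |F (A + xiMat N i j p.1 p.2)|

instance matMS (N : ℕ) : MeasurableSpace (Matrix (Fin N) (Fin N) ℝ) :=
  show MeasurableSpace (Fin N → Fin N → ℝ) from inferInstance

/-- the GOE: push-forward of independent centered Gaussians with variance `(1+δ_{ij})/N`
on the upper triangle under the symmetrization map. -/
def goeMeasure (N : ℕ) : Measure (Matrix (Fin N) (Fin N) ℝ) :=
  Measure.map (fun f => Matrix.of fun i j => if i ≤ j then f (i, j) else f (j, i))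
    (Measure.pi fun p : Fin N × Fin N =>
      ProbabilityTheory.gaussianReal 0 (if p.1 = p.2 then 2 / N else 1 / N))

/-- the uniform probability measure on `d`-regular graphs on `N` vertices, as a measure. -/
def uniformReg (N d : ℕ) : Measure (Matrix (Fin N) (Fin N) ℝ) :=
  (Nat.card {A : Matrix (Fin N) (Fin N) ℝ // IsAdjMat N d A} : ℝ≥0∞)⁻¹ •
    Measure.sum fun A : {A : Matrix (Fin N) (Fin N) ℝ // IsAdjMat N d A} =>
      Measure.dirac A.1

/-- the matrix flow `A(t) = e^{-t/2} q⁻¹𝒜 + √(1-e^{-t}) W`, where `W = P⊥ H P⊥`. -/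
def flowMat (N d : ℕ) (A H : Matrix (Fin N) (Fin N) ℝ) (t : ℝ) : Matrix (Fin N) (Fin N) ℝ :=
  Real.exp (-t / 2) • ((qval N d)⁻¹ • A) +
    Real.sqrt (1 - Real.exp (-t)) • (PperpR N * H * PperpR N)

/-- the Green function of the matrix flow, `G(t;z) = P⊥ (A(t) - z)⁻¹ P⊥`. -/
def greenFlow (N d : ℕ) (A H : Matrix (Fin N) (Fin N) ℝ) (t : ℝ) (z : ℂ) :
    Matrix (Fin N) (Fin N) ℂ :=
  Pperp N * ((flowMat N d A H t).map Complex.ofReal - z • 1)⁻¹ * Pperp N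

/-- the normalized trace of the Green function of the flow. -/
def gbarFlow (N d : ℕ) (A H : Matrix (Fin N) (Fin N) ℝ) (t : ℝ) (z : ℂ) : ℂ :=
  (N : ℂ)⁻¹ * (greenFlow N d A H t z).trace

def nn {N : ℕ} (v : Fin N → ℝ) : ℝ := ‖WithLp.toLp 2 v‖

theorem nn_nonneg {N : ℕ} (v : Fin N → ℝ) : 0 ≤ nn v := norm_nonneg _

theorem nn_sq {N : ℕ} (v : Fin N → ℝ) : nn v ^ 2 = v ⬝ᵥ v := by
  rw [nn, EuclideanSpace.norm_sq_eq]
  simp [dotProduct, sq]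

theorem nn_add {N : ℕ} (v w : Fin N → ℝ) : nn (v + w) ≤ nn v + nn w := by
  rw [nn, WithLp.toLp_add]; exact norm_add_le _ _

theorem nn_sub {N : ℕ} (v w : Fin N → ℝ) : nn (v - w) ≤ nn v + nn w := by
  rw [nn, WithLp.toLp_sub]; exact norm_sub_le _ _

theorem nn_smul {N : ℕ} (c : ℝ) (v : Fin N → ℝ) : nn (c • v) = |c| * nn v := by
  rw [nn, WithLp.toLp_smul, norm_smul, Real.norm_eq_abs]; rfl

theorem nn_single {N : ℕ} (k : Fin N) : nn (Pi.single k (1:ℝ)) = 1 := by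
  have h := nn_sq (Pi.single k (1:ℝ) : Fin N → ℝ)
  simp at h
  rcases h with h | h
  · exact h
  · have := nn_nonneg (Pi.single k (1:ℝ) : Fin N → ℝ); linarith

theorem nn_cs {N : ℕ} (v w : Fin N → ℝ) : |v ⬝ᵥ w| ≤ nn v * nn w := by
  have h := abs_real_inner_le_norm (WithLp.toLp 2 v) (WithLp.toLp 2 w)
  rw [EuclideanSpace.inner_eq_star_dotProduct] at h
  simp only [star_trivial] at h
  rw [dotProduct_comm] at h
  exact h

theorem nn_rev {N : ℕ} (v w : Fin N → ℝ) : |nn v - nn w| ≤ nn (v - w) := by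
  simp only [nn, WithLp.toLp_sub]; exact abs_norm_sub_norm_le _ _

theorem pow_diff (a b : ℝ) (ha : 0 ≤ a) (hb : 0 ≤ b) (m : ℕ) :
    |a ^ m - b ^ m| * b ≤ m * (a ^ m + b ^ m) * |a - b| := by
  rw [← (Commute.all a b).geom_sum₂_mul, abs_mul]
  have h : |∑ i ∈ Finset.range m, a ^ i * b ^ (m - 1 - i)| * b ≤ m * (a ^ m + b ^ m) := by
    rw [abs_of_nonneg (Finset.sum_nonneg fun i _ => by positivity), Finset.sum_mul]
    calc _ ≤ ∑ i ∈ Finset.range m, (a ^ m + b ^ m) := by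
          refine Finset.sum_le_sum fun i hi => ?_
          have hi' := Finset.mem_range.1 hi
          rw [mul_assoc, ← pow_succ]
          have e : m - 1 - i + 1 = m - i := by omega
          rw [e]
          rcases le_total a b with h | h
          · calc a ^ i * b ^ (m - i) ≤ b ^ i * b ^ (m - i) := by gcongr
              _ = b ^ m := by rw [← pow_add]; congr 1; omega
              _ ≤ _ := by have : 0 ≤ a ^ m := by positivity
                          linarith
          · calc a ^ i * b ^ (m - i) ≤ a ^ i * a ^ (m - i) := by gcongr
              _ = a ^ m := by rw [← pow_add]; congr 1; omega
              _ ≤ _ := by have : 0 ≤ b ^ m := by positivity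
                          linarith
      _ = _ := by simp; ring
  calc _ = (|∑ i ∈ Finset.range m, a ^ i * b ^ (m - 1 - i)| * b) * |a - b| := by ring
    _ ≤ _ := by gcongr

theorem hh_diff {N : ℕ} (v w : Fin N → ℝ) (m : ℕ) :
    nn (nn v ^ m • v - nn w ^ m • w) ≤ (m + 1) * (nn v ^ m + nn w ^ m) * nn (v - w) := by
  have e : nn v ^ m • v - nn w ^ m • w
      = nn v ^ m • (v - w) + (nn v ^ m - nn w ^ m) • w := by
    rw [smul_sub, sub_smul]; abel
  rw [e]
  refine (nn_add _ _).trans ?_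
  rw [nn_smul, nn_smul]
  have h1 := pow_diff (nn v) (nn w) (nn_nonneg v) (nn_nonneg w) m
  have h2 := nn_rev v w
  have p1 : 0 ≤ nn v ^ m := pow_nonneg (nn_nonneg v) m
  have p2 : 0 ≤ nn w ^ m := pow_nonneg (nn_nonneg w) m
  have p3 := nn_nonneg (v - w)
  rw [abs_of_nonneg p1]
  have h3 : (m:ℝ) * (nn v ^ m + nn w ^ m) * |nn v - nn w|
      ≤ (m:ℝ) * (nn v ^ m + nn w ^ m) * nn (v - w) := by gcongr
  have : 0 ≤ nn w ^ m * nn (v - w) := by positivity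
  nlinarith

theorem perswitch {N : ℕ} (v v' z z' : Fin N → ℝ) (m : ℕ) (D1 Z E : ℝ)
    (h1 : nn (v - v') ≤ D1) (h2 : nn z ≤ Z) (h3 : nn (z - z') ≤ E) :
    nn v ^ m * (v ⬝ᵥ z) - nn v' ^ m * (v' ⬝ᵥ z') ≤
      (m + 1) * D1 * Z * (nn v ^ m + nn v' ^ m) + E * nn v' ^ (m + 1) := by
  have e : nn v ^ m * (v ⬝ᵥ z) - nn v' ^ m * (v' ⬝ᵥ z')
      = (nn v ^ m • v - nn v' ^ m • v') ⬝ᵥ z + nn v' ^ m * (v' ⬝ᵥ (z - z')) := by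
    simp only [sub_dotProduct, smul_dotProduct, dotProduct_sub, smul_eq_mul]; ring
  rw [e]
  have a1 := (le_abs_self _).trans (nn_cs (nn v ^ m • v - nn v' ^ m • v') z)
  have a2 := (le_abs_self _).trans (nn_cs v' (z - z'))
  have p1 : 0 ≤ nn v ^ m := pow_nonneg (nn_nonneg v) m
  have p2 : 0 ≤ nn v' ^ m := pow_nonneg (nn_nonneg v') m
  have q1 := nn_nonneg v'
  have q2 := nn_nonneg z
  have q3 := nn_nonneg (v - v')
  have b1 : nn (nn v ^ m • v - nn v' ^ m • v') * nn z ≤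
      ((m + 1) * (nn v ^ m + nn v' ^ m) * D1) * Z := by
    have := (hh_diff v v' m).trans
      (mul_le_mul_of_nonneg_left h1 (by positivity : 0 ≤ ((m:ℝ) + 1) * (nn v ^ m + nn v' ^ m)))
    have hD : 0 ≤ D1 := q3.trans h1
    exact mul_le_mul this h2 q2 (by positivity)
  have b2 : nn v' ^ m * (v' ⬝ᵥ (z - z')) ≤ nn v' ^ m * (nn v' * E) := by
    refine mul_le_mul_of_nonneg_left (a2.trans ?_) p2
    gcongr
  rw [pow_succ]
  linarith

section lemmasA
variable {N d : ℕ} {A : Matrix (Fin N) (Fin N) ℝ}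

theorem adj_col (h : IsAdjMat N d A) (j : Fin N) : ∑ x, A x j = d := by
  rw [← h.2.2.2 j]; exact Finset.sum_congr rfl fun x _ => h.1.apply _ _

theorem adj_symm (h : IsAdjMat N d A) (x y : Fin N) : A x y = A y x := h.1.apply _ _

theorem adj_nonneg (h : IsAdjMat N d A) (x y : Fin N) : 0 ≤ A x y := by
  rcases h.2.2.1 x y with e | e <;> rw [e] <;> norm_num

theorem adj_le (h : IsAdjMat N d A) (x y : Fin N) : A x y ≤ 1 := by
  rcases h.2.2.1 x y with e | e <;> rw [e] <;> norm_num

theorem adj_dot (h : IsAdjMat N d A) (v w : Fin N → ℝ) : v ⬝ᵥ (A *ᵥ w) = (A *ᵥ v) ⬝ᵥ w := by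
  rw [Matrix.dotProduct_mulVec, ← Matrix.mulVec_transpose, h.1.eq]

theorem adj_one (h : IsAdjMat N d A) (c : ℝ) : A *ᵥ (fun _ => c) = fun _ => d * c := by
  ext x; simp [mulVec, dotProduct, ← Finset.sum_mul, h.2.2.2]

/-- the centred row -/
def vv (N d : ℕ) (i : Fin N) (A : Matrix (Fin N) (Fin N) ℝ) : Fin N → ℝ :=
  A *ᵥ (A *ᵥ Pi.single i 1) - fun _ => (d:ℝ) ^ 2 / N

theorem vv_apply (h : IsAdjMat N d A) (i j : Fin N) :
    vv N d i A j = (A ^ 2) i j - (d:ℝ) ^ 2 / N := by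
  simp only [vv, Pi.sub_apply, sub_left_inj, sq A, Matrix.mul_apply, mulVec_single_one, mulVec,
    dotProduct, Matrix.col_apply]
  exact Finset.sum_congr rfl fun x _ => by rw [adj_symm h j x, adj_symm h x i]; ring

theorem vv_one (h : IsAdjMat N d A) (i : Fin N) (c : ℝ) : vv N d i A ⬝ᵥ (fun _ => c) = 0 := by
  have hN : (N:ℝ) ≠ 0 := by
    have := i.pos; positivity
  rw [vv, sub_dotProduct, dotProduct_comm, adj_dot h, adj_one h, adj_dot h, adj_one h]
  have e : (Pi.single i (1:ℝ) : Fin N → ℝ) ⬝ᵥ (fun _ => (d:ℝ) * (d * c)) = d * (d * c) := by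
    rw [single_dotProduct, one_mul]
  rw [dotProduct_comm] at e
  first | rw [e] | rw [dotProduct_comm, e]
  simp [dotProduct]
  field_simp
  ring

theorem z_bound (h : IsAdjMat N d A) (k l : Fin N) :
    nn (A *ᵥ (Pi.single k 1 - Pi.single l 1)) ≤ Real.sqrt (2 * d) := by
  apply Real.le_sqrt_of_sq_le
  rw [nn_sq, mulVec_sub, mulVec_single_one, mulVec_single_one]
  simp only [dotProduct, Pi.sub_apply, Matrix.col_apply]
  calc _ ≤ ∑ x, (A x k + A x l) := by
        refine Finset.sum_le_sum fun x _ => ?_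
        rcases h.2.2.1 x k with e | e <;> rcases h.2.2.1 x l with f | f <;> rw [e, f] <;> norm_num
    _ = _ := by rw [Finset.sum_add_distrib, adj_col h, adj_col h]; ring

/-- switch weight -/
def ww (i : Fin N) (A : Matrix (Fin N) (Fin N) ℝ) (k l m : Fin N) : ℝ :=
  A i k * A l m * (1 - A i l - if i = l then 1 else 0) * (1 - A k m - if k = m then 1 else 0)

theorem sum_T (h : IsAdjMat N d A) (k l : Fin N) :
    ∑ m, A l m * (1 - A k m - if k = m then 1 else 0) = d - A k l - (A * A) k l := by
  simp only [mul_sub, Finset.sum_sub_distrib, mul_one, h.2.2.2, mul_ite, mul_zero,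
    Finset.sum_ite_eq, Finset.mem_univ, if_true, Matrix.mul_apply]
  rw [adj_symm h l k]
  have : ∑ x, A l x * A k x = ∑ x, A k x * A x l :=
    Finset.sum_congr rfl fun x _ => by rw [adj_symm h l x]; ring
  rw [this]; ring

theorem drift_eq (h : IsAdjMat N d A) (i : Fin N) (y : Fin N → ℝ) :
    ∑ k, ∑ l, ∑ m, ww i A k l m * (y k - y l) =
      (d * (N - 1 - d)) * ((A *ᵥ Pi.single i 1) ⬝ᵥ y)
        - d ^ 2 * ((fun _ => (1:ℝ)) ⬝ᵥ y)
        + (A *ᵥ (A *ᵥ Pi.single i 1)) ⬝ᵥ y + (A *ᵥ (A *ᵥ (A *ᵥ Pi.single i 1))) ⬝ᵥ y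
        - ∑ k, A i k * (d - A k i - (A * A) k i) * (y k - y i) := by
  set T : Fin N → Fin N → ℝ := fun k l => d - A k l - (A * A) k l with hT
  have Tsymm : ∀ k l, T k l = T l k := by
    intro k l
    have : (A * A) k l = (A * A) l k := by
      simp only [Matrix.mul_apply]
      exact Finset.sum_congr rfl fun x _ => by rw [adj_symm h k x, adj_symm h x l]; ring
    simp only [hT]; rw [this, adj_symm h k l]
  have e1 : ∀ k l, ∑ m, ww i A k l m * (y k - y l)
      = A i k * T k l * (y k - y l) - A i k * A i l * T k l * (y k - y l)
        - if i = l then A i k * T k l * (y k - y l) else 0 := by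
    intro k l
    have : ∀ m, ww i A k l m * (y k - y l) = (A i k * (1 - A i l - if i = l then 1 else 0) *
      (y k - y l)) * (A l m * (1 - A k m - if k = m then 1 else 0)) := by
      intro m; simp only [ww]; ring
    simp only [this]
    rw [← Finset.mul_sum, sum_T h]
    simp only [hT]
    split_ifs <;> ring
  have anti : ∑ k, ∑ l, A i k * A i l * T k l * (y k - y l) = 0 := by
    have : ∑ k, ∑ l, A i k * A i l * T k l * (y k - y l)
        = - ∑ k, ∑ l, A i k * A i l * T k l * (y k - y l) := by
      conv_lhs => rw [Finset.sum_comm]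
      simp only [← Finset.sum_neg_distrib]
      refine Finset.sum_congr rfl fun k _ => Finset.sum_congr rfl fun l _ => ?_
      rw [Tsymm l k]; ring
    linarith
  have row2 : ∀ k, ∑ l, (A * A) k l = (d:ℝ) ^ 2 := by
    intro k
    simp only [Matrix.mul_apply]
    rw [Finset.sum_comm]
    simp only [← Finset.mul_sum, h.2.2.2, ← Finset.sum_mul]; ring
  have Trow : ∀ k, ∑ l, T k l = d * (N - 1 - d) := by
    intro k
    simp only [hT, Finset.sum_sub_distrib, h.2.2.2, row2]
    simp; ring
  have ai : ∀ k, (A *ᵥ Pi.single i 1) k = A i k := by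
    intro k; simp [mulVec_single_one, adj_symm h k i]
  have Tcol : ∀ l, ∑ k, A i k * T k l
      = d ^ 2 - (A *ᵥ (A *ᵥ Pi.single i 1)) l - (A *ᵥ (A *ᵥ (A *ᵥ Pi.single i 1))) l := by
    intro l
    have s1 : ∑ k, A i k * A k l = (A *ᵥ (A *ᵥ Pi.single i 1)) l := by
      rw [mulVec, dotProduct]
      exact Finset.sum_congr rfl fun k _ => by rw [ai, adj_symm h k l]; ring
    have s2 : ∑ k, A i k * (A * A) k l = (A *ᵥ (A *ᵥ (A *ᵥ Pi.single i 1))) l := by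
      rw [Matrix.mulVec_mulVec (A *ᵥ Pi.single i 1) A A, mulVec, dotProduct]
      refine Finset.sum_congr rfl fun k _ => ?_
      have := Tsymm k l
      simp only [hT] at this
      rw [adj_symm h k l] at this
      rw [ai]
      have : (A * A) k l = (A * A) l k := by linarith
      rw [this]; ring
    simp only [hT, mul_sub, Finset.sum_sub_distrib, ← Finset.sum_mul, s1, s2]
    rw [h.2.2.2]; ring
  simp only [e1, Finset.sum_sub_distrib, anti, Finset.sum_ite_eq, Finset.mem_univ, if_true]
  have m1 : ∑ k, ∑ l, A i k * T k l * (y k - y l)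
      = ∑ k, A i k * y k * ∑ l, T k l - ∑ l, (∑ k, A i k * T k l) * y l := by
    have : ∑ l, (∑ k, A i k * T k l) * y l = ∑ k, ∑ l, A i k * T k l * y l := by
      rw [Finset.sum_comm]; simp only [Finset.sum_mul]
    rw [this, ← Finset.sum_sub_distrib]
    refine Finset.sum_congr rfl fun k _ => ?_
    rw [Finset.mul_sum, ← Finset.sum_sub_distrib]
    exact Finset.sum_congr rfl fun l _ => by ring
  rw [m1]
  simp only [Trow, Tcol]
  simp only [dotProduct, ai, sub_mul, Finset.sum_sub_distrib, one_mul, ← Finset.mul_sum,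
    ← Finset.sum_mul]
  ring

theorem T_bounds (h : IsAdjMat N d A) (k l : Fin N) :
    |(d:ℝ) - A k l - (A * A) k l| ≤ d := by
  rw [← sum_T h k l]
  refine (Finset.abs_sum_le_sum_abs _ _).trans ?_
  rw [← h.2.2.2 l]
  refine Finset.sum_le_sum fun m _ => ?_
  by_cases e : k = m
  · subst e
    rcases h.2.2.1 l k with f | f <;> rw [f] <;> simp [h.2.1]
  · rcases h.2.2.1 l m with f | f <;> rcases h.2.2.1 k m with g | g <;> rw [f, g] <;> simp [e]

theorem drift_lower (h : IsAdjMat N d A) (hd : 1 ≤ d) (hN : 2 * d ≤ N) (h8 : 8 ≤ N) (i : Fin N) :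
    d * N / 4 * nn (vv N d i A) ^ 2 - d ^ 2 * N * nn (vv N d i A) ≤
    ∑ k, ∑ l, ∑ m, ww i A k l m *
      (vv N d i A ⬝ᵥ (A *ᵥ (Pi.single k 1 - Pi.single l 1))) := by
  set v := vv N d i A with hv
  set y := A *ᵥ v with hy
  have ey : ∀ k l, v ⬝ᵥ (A *ᵥ (Pi.single k 1 - Pi.single l 1)) = y k - y l := by
    intro k l; rw [adj_dot h, dotProduct_sub]; simp [hy]
  simp only [ey]
  rw [drift_eq h]
  have hv1 : ∀ c : ℝ, v ⬝ᵥ (fun _ => c) = 0 := vv_one h i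
  have hc : A *ᵥ (A *ᵥ Pi.single i 1) = v + fun _ => (d:ℝ) ^ 2 / N := by
    rw [hv, vv]; abel
  have t1 : (A *ᵥ Pi.single i 1) ⬝ᵥ y = nn v ^ 2 := by
    rw [hy, adj_dot h, hc, nn_sq, dotProduct_comm, dotProduct_add, hv1, add_zero]
  have t2 : (fun _ => (1:ℝ)) ⬝ᵥ y = 0 := by
    rw [hy, adj_dot h, adj_one h, dotProduct_comm, hv1]
  have t0 : ∀ c : ℝ, (fun _ => c) ⬝ᵥ y = 0 := by
    intro c; rw [hy, adj_dot h, adj_one h, dotProduct_comm, hv1]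
  have t3 : (A *ᵥ (A *ᵥ Pi.single i 1)) ⬝ᵥ y = v ⬝ᵥ y := by
    rw [hc, add_dotProduct, t0, add_zero]
  have t4 : (A *ᵥ (A *ᵥ (A *ᵥ Pi.single i 1))) ⬝ᵥ y = nn y ^ 2 := by
    rw [hc, mulVec_add, adj_one h, add_dotProduct, t0, nn_sq, add_zero]
  rw [t1, t2, t3, t4]
  have cs := neg_abs_le (v ⬝ᵥ y)
  have cs2 := nn_cs v y
  have hv0 := nn_nonneg v
  have hy0 := nn_nonneg y
  have corr : ∑ k, A i k * (d - A k i - (A * A) k i) * (y k - y i) ≤ d ^ 2 * N * nn v := by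
    calc _ ≤ ∑ k, A i k * (d * (nn v * N)) := by
          refine Finset.sum_le_sum fun k _ => ?_
          rw [mul_assoc]
          refine mul_le_mul_of_nonneg_left ?_ (adj_nonneg h i k)
          refine (le_abs_self _).trans ?_
          rw [abs_mul]
          refine mul_le_mul (T_bounds h k i) ?_ (abs_nonneg _) (by positivity)
          rw [← ey]
          refine (nn_cs _ _).trans ?_
          refine mul_le_mul_of_nonneg_left ((z_bound h k i).trans ?_) hv0
          have hN' : (2 * d : ℝ) ≤ N := by exact_mod_cast hN
          have h1 : (1:ℝ) ≤ N := by exact_mod_cast (by omega : 1 ≤ N)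
          rw [Real.sqrt_le_left (by positivity)]
          nlinarith
      _ = _ := by rw [← Finset.sum_mul, h.2.2.2]; ring
  have q : -(1/4) * nn v ^ 2 ≤ v ⬝ᵥ y + nn y ^ 2 := by
    nlinarith [sq_nonneg (nn v / 2 - nn y)]
  have hd' : (1:ℝ) ≤ d := by exact_mod_cast hd
  have hN' : (2 * d : ℝ) ≤ N := by exact_mod_cast hN
  have h8' : (8:ℝ) ≤ N := by exact_mod_cast h8
  have co : (d:ℝ) * N / 4 ≤ d * (N - 1 - d) - 1 / 4 := by nlinarith
  have := mul_le_mul_of_nonneg_right co (sq_nonneg (nn v))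
  linarith

end lemmasA

set_option linter.unusedSimpArgs false

section lemmasB
variable {N d : ℕ} {A : Matrix (Fin N) (Fin N) ℝ}

def Valid (i : Fin N) (A : Matrix (Fin N) (Fin N) ℝ) (k l m : Fin N) : Prop :=
  A i k = 1 ∧ A l m = 1 ∧ A i l = 0 ∧ i ≠ l ∧ A k m = 0 ∧ k ≠ m

theorem ww_eq (h : IsAdjMat N d A) (i k l m : Fin N) [Decidable (Valid i A k l m)] :
    ww i A k l m = if Valid i A k l m then 1 else 0 := by
  unfold ww
  by_cases e1 : i = l
  · have : ¬ Valid i A k l m := fun hv => hv.2.2.2.1 e1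
    subst e1
    simp [this, h.2.1]
  by_cases e2 : k = m
  · have : ¬ Valid i A k l m := fun hv => hv.2.2.2.2.2 e2
    subst e2
    simp [this, h.2.1]
  by_cases hV : Valid i A k l m
  · rw [if_pos hV]
    obtain ⟨a, b, c, _, e, _⟩ := hV
    simp [a, b, c, e, e1, e2]
  · rw [if_neg hV]
    rcases h.2.2.1 i k with a | a <;> rcases h.2.2.1 l m with b | b <;>
    rcases h.2.2.1 i l with c | c <;> rcases h.2.2.1 k m with f | f <;>
    first
    | (simp [a, b, c, f, e1, e2]; done)
    | (exfalso; exact hV ⟨a, b, c, e1, f, e2⟩)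

def sw (i : Fin N) (A : Matrix (Fin N) (Fin N) ℝ) (k l m : Fin N) :
    Matrix (Fin N) (Fin N) ℝ := A + xiMat N i l k m

theorem valid_ne (h : IsAdjMat N d A) {i k l m : Fin N} (hV : Valid i A k l m) :
    i ≠ k ∧ i ≠ l ∧ i ≠ m ∧ k ≠ l ∧ k ≠ m ∧ l ≠ m := by
  obtain ⟨a, b, c, e, f, g⟩ := hV
  refine ⟨?_, e, ?_, ?_, g, ?_⟩
  · rintro rfl; rw [h.2.1] at a; norm_num at a
  · rintro rfl; rw [adj_symm h] at b; rw [b] at c; norm_num at c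
  · rintro rfl; rw [a] at c; norm_num at c
  · rintro rfl; rw [h.2.1] at b; norm_num at b

theorem Dmat_symm (a b x y : Fin N) : Dmat N a b x y = Dmat N a b y x := by
  simp [Dmat, add_comm]

theorem Dmat_mulVec (a b : Fin N) (w : Fin N → ℝ) :
    Dmat N a b *ᵥ w = w b • Pi.single a 1 + w a • Pi.single b 1 := by
  ext x
  simp only [Dmat, mulVec, dotProduct, Matrix.of_apply, add_mul, Finset.sum_add_distrib,
    Pi.add_apply, Pi.smul_apply, smul_eq_mul, ite_mul, one_mul, zero_mul]
  congr 1
  · by_cases e : a = x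
    · subst e; simp
    · simp [e, Ne.symm e]
  · by_cases e : b = x
    · subst e; simp
    · simp [e, Ne.symm e]

theorem sw_adj (h : IsAdjMat N d A) {i k l m : Fin N} (hV : Valid i A k l m) :
    IsAdjMat N d (sw i A k l m) := by
  obtain ⟨n1, n2, n3, n4, n5, n6⟩ := valid_ne h hV
  obtain ⟨a, b, c, e, f, g⟩ := hV
  refine ⟨?_, ?_, ?_, ?_⟩
  · ext x y
    simp only [Matrix.transpose_apply, sw, xiMat, Matrix.add_apply, Matrix.sub_apply]
    rw [adj_symm h y x, Dmat_symm i l y x, Dmat_symm k m y x, Dmat_symm i k y x, Dmat_symm l m y x]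
  · intro x
    simp only [sw, xiMat, Matrix.add_apply, Matrix.sub_apply, h.2.1, Dmat, Matrix.of_apply]
    have q : ∀ a b : Fin N, a ≠ b → ¬ (a = x ∧ b = x) := by
      rintro a b hab ⟨rfl, rfl⟩; exact hab rfl
    simp [q _ _ n1, q _ _ n2, q _ _ n5, q _ _ n6]
  · intro x y
    have a' := adj_symm h i k
    have b' := adj_symm h l m
    have c' := adj_symm h i l
    have f' := adj_symm h k m
    simp only [sw, xiMat, Matrix.add_apply, Matrix.sub_apply, Dmat, Matrix.of_apply]
    have := h.2.2.1 x y
    by_cases x1 : i = x <;> by_cases x2 : k = x <;> by_cases x3 : l = x <;> by_cases x4 : m = x <;>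
    by_cases y1 : i = y <;> by_cases y2 : k = y <;> by_cases y3 : l = y <;> by_cases y4 : m = y <;>
    first
    | (exfalso; subst_vars; contradiction)
    | (exfalso; subst_vars; simp_all; done)
    | (simp only [x1, x2, x3, x4, y1, y2, y3, y4, and_true, and_false, if_true, if_false]
       norm_num
       subst_vars
       simp_all)
  · intro x
    have : ∑ j, sw i A k l m x j = ((sw i A k l m) *ᵥ (fun _ => (1:ℝ))) x := by
      simp [mulVec, dotProduct]
    rw [this, sw, add_mulVec, adj_one h, xiMat, sub_mulVec, sub_mulVec, add_mulVec]
    simp only [Dmat_mulVec, Pi.add_apply, Pi.sub_apply]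
    ring

theorem sw_valid (h : IsAdjMat N d A) {i k l m : Fin N} (hV : Valid i A k l m) :
    Valid i (sw i A k l m) l k m := by
  obtain ⟨n1, n2, n3, n4, n5, n6⟩ := valid_ne h hV
  obtain ⟨a, b, c, e, f, g⟩ := hV
  refine ⟨?_, ?_, ?_, n1, ?_, n6⟩ <;>
  simp [sw, xiMat, Dmat, *, n1.symm, n2.symm, n3.symm, n4.symm, n5.symm, n6.symm]

theorem sw_sw (i k l m : Fin N) : sw i (sw i A k l m) l k m = A := by
  simp only [sw, xiMat]; abel

theorem z_diff {i k l m : Fin N} (h : IsAdjMat N d A) (hV : Valid i A k l m) :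
    nn (A *ᵥ (Pi.single k 1 - Pi.single l 1) -
      sw i A k l m *ᵥ (Pi.single k 1 - Pi.single l 1)) ≤ 4 := by
  obtain ⟨n1, n2, n3, n4, n5, n6⟩ := valid_ne h hV
  have : A *ᵥ (Pi.single k 1 - Pi.single l 1) -
      sw i A k l m *ᵥ (Pi.single k 1 - Pi.single l 1)
      = (2:ℝ) • (Pi.single i 1 - Pi.single m 1) := by
    rw [sw, add_mulVec, xiMat, sub_mulVec, sub_mulVec, add_mulVec]
    simp only [Dmat_mulVec, Pi.sub_apply]
    simp [n1, n2, n3, n4, n5, n6, n1.symm, n2.symm, n3.symm, n4.symm, n5.symm, n6.symm]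
    module
  rw [this, nn_smul]
  have := nn_sub (Pi.single i (1:ℝ)) (Pi.single m 1)
  rw [nn_single, nn_single] at this
  norm_num; linarith

theorem v_diff {i k l m : Fin N} (h : IsAdjMat N d A) (hd : 1 ≤ d) (hV : Valid i A k l m) :
    nn (vv N d i A - vv N d i (sw i A k l m)) ≤ 4 + Real.sqrt (2 * d) := by
  obtain ⟨n1, n2, n3, n4, n5, n6⟩ := valid_ne h hV
  have h' := sw_adj h hV
  set A' := sw i A k l m with hA'
  obtain ⟨a, b, c, e, f, g⟩ := hV
  have s1 : A' *ᵥ Pi.single i 1 = A *ᵥ Pi.single i 1 - (Pi.single k 1 - Pi.single l 1) := by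
    rw [hA', sw, add_mulVec, xiMat, sub_mulVec, sub_mulVec, add_mulVec]
    simp only [Dmat_mulVec]
    simp [n1, n2, n3, n4, n5, n6, n1.symm, n2.symm, n3.symm, n4.symm, n5.symm, n6.symm]
    module
  have ai : ∀ k, (A *ᵥ Pi.single i 1) k = A i k := by
    intro k; simp [adj_symm h k i]
  have s2 : A' *ᵥ (A *ᵥ Pi.single i 1) = A *ᵥ (A *ᵥ Pi.single i 1) +
      ((Pi.single m 1 - Pi.single i 1) + A i m • (Pi.single k 1 - Pi.single l 1)) := by
    rw [hA', sw, add_mulVec, xiMat, sub_mulVec, sub_mulVec, add_mulVec]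
    simp only [Dmat_mulVec, ai, a, c, h.2.1]
    module
  have : vv N d i A - vv N d i A' = A' *ᵥ (Pi.single k 1 - Pi.single l 1) -
      ((Pi.single m 1 - Pi.single i 1) + A i m • (Pi.single k 1 - Pi.single l 1)) := by
    rw [vv, vv, s1, mulVec_sub, s2]; abel
  rw [this]
  have b1 := nn_sub (A' *ᵥ (Pi.single k 1 - Pi.single l 1))
    ((Pi.single m 1 - Pi.single i 1) + A i m • (Pi.single k 1 - Pi.single l 1))
  have b2 := nn_add (Pi.single m 1 - Pi.single i 1) (A i m • (Pi.single k 1 - Pi.single l 1))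
  have b3 := nn_sub (Pi.single m (1:ℝ)) (Pi.single i 1)
  have b4 := nn_sub (Pi.single k (1:ℝ)) (Pi.single l 1)
  have b5 := z_bound h' k l
  rw [nn_single, nn_single] at b3 b4
  rw [nn_smul, abs_of_nonneg (adj_nonneg h i m)] at b2
  have b6 := mul_le_mul (adj_le h i m) b4 (nn_nonneg _) zero_le_one
  linarith

theorem switch_bound {i k l m : Fin N} (h : IsAdjMat N d A) (hd : 1 ≤ d) (hV : Valid i A k l m)
    (n : ℕ) :
    nn (vv N d i A) ^ n * (vv N d i A ⬝ᵥ (A *ᵥ (Pi.single k 1 - Pi.single l 1)))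
      + nn (vv N d i (sw i A k l m)) ^ n * (vv N d i (sw i A k l m) ⬝ᵥ
          (sw i A k l m *ᵥ (Pi.single l 1 - Pi.single k 1))) ≤
      (n + 1) * 12 * d * (nn (vv N d i A) ^ n + nn (vv N d i (sw i A k l m)) ^ n)
        + 4 * nn (vv N d i (sw i A k l m)) ^ (n + 1) := by
  have hp := perswitch _ _ _ _ n _ _ _ (v_diff h hd hV) (z_bound h k l) (z_diff h hV)
  have e : sw i A k l m *ᵥ (Pi.single l 1 - Pi.single k 1)
      = - (sw i A k l m *ᵥ (Pi.single k 1 - Pi.single l 1)) := by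
    rw [← mulVec_neg, neg_sub]
  rw [e, dotProduct_neg, mul_neg, ← sub_eq_add_neg]
  refine hp.trans ?_
  have hd' : (1:ℝ) ≤ d := by exact_mod_cast hd
  have q : (4 + Real.sqrt (2 * d)) * Real.sqrt (2 * d) ≤ 12 * d := by
    have s1 := Real.mul_self_sqrt (by positivity : (0:ℝ) ≤ 2 * d)
    have s2 : Real.sqrt (2 * d) ≤ 2 * d := by
      rw [Real.sqrt_le_left (by positivity)]; nlinarith
    nlinarith
  have p : 0 ≤ ((n:ℝ) + 1) * (nn (vv N d i A) ^ n + nn (vv N d i (sw i A k l m)) ^ n) := by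
    have := nn_nonneg (vv N d i A)
    have := nn_nonneg (vv N d i (sw i A k l m))
    positivity
  nlinarith [mul_le_mul_of_nonneg_left q p]

end lemmasB

section lemmasC
variable {N d : ℕ}

theorem finite_graphs (N d : ℕ) : {A : Matrix (Fin N) (Fin N) ℝ | IsAdjMat N d A}.Finite := by
  have h : (Set.univ.pi fun _ : Fin N => Set.univ.pi fun _ : Fin N => ({0, 1} : Set ℝ)).Finite :=
    Set.Finite.pi fun _ => Set.Finite.pi fun _ => Set.toFinite _
  refine h.subset fun A hA => ?_
  intro x _ y _
  rcases hA.2.2.1 x y with e | e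
  · exact Or.inl e
  · exact Or.inr e

/-- the finite set of graphs -/
def Gs (N d : ℕ) : Finset (Matrix (Fin N) (Fin N) ℝ) := (finite_graphs N d).toFinset

theorem mem_Gs {A : Matrix (Fin N) (Fin N) ℝ} : A ∈ Gs N d ↔ IsAdjMat N d A := by
  simp [Gs]

abbrev SwT (N : ℕ) := Matrix (Fin N) (Fin N) ℝ × Fin N × Fin N × Fin N

open Classical in
/-- the set of admissible switchings -/
def Sx (N d : ℕ) (i : Fin N) : Finset (SwT N) :=
  (Gs N d ×ˢ Finset.univ).filter fun x => Valid i x.1 x.2.1 x.2.2.1 x.2.2.2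

theorem mem_Sx {i : Fin N} {x : SwT N} :
    x ∈ Sx N d i ↔ IsAdjMat N d x.1 ∧ Valid i x.1 x.2.1 x.2.2.1 x.2.2.2 := by
  simp [Sx, mem_Gs]

def tau (i : Fin N) (x : SwT N) : SwT N :=
  (sw i x.1 x.2.1 x.2.2.1 x.2.2.2, x.2.2.1, x.2.1, x.2.2.2)

theorem tau_mem {i : Fin N} {x : SwT N} (hx : x ∈ Sx N d i) : tau i x ∈ Sx N d i := by
  rw [mem_Sx] at hx ⊢
  exact ⟨sw_adj hx.1 hx.2, sw_valid hx.1 hx.2⟩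

theorem tau_tau (i : Fin N) (x : SwT N) : tau i (tau i x) = x := by
  simp only [tau, sw_sw]

theorem exch (i : Fin N) (φ : SwT N → ℝ) :
    ∑ x ∈ Sx N d i, φ (tau i x) = ∑ x ∈ Sx N d i, φ x :=
  Finset.sum_nbij' (tau i) (tau i) (fun _ hx => tau_mem hx) (fun _ hx => tau_mem hx)
    (fun x _ => tau_tau i x) (fun x _ => tau_tau i x) (fun _ _ => rfl)

theorem sum_Sx (i : Fin N) (φ : SwT N → ℝ) :
    ∑ x ∈ Sx N d i, φ x =
      ∑ A ∈ Gs N d, ∑ k, ∑ l, ∑ m, ww i A k l m * φ (A, k, l, m) := by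
  classical
  rw [Sx, Finset.sum_filter, Finset.sum_product]
  refine Finset.sum_congr rfl fun A hA => ?_
  rw [Fintype.sum_prod_type]
  refine Finset.sum_congr rfl fun k _ => ?_
  rw [Fintype.sum_prod_type]
  refine Finset.sum_congr rfl fun l _ => Finset.sum_congr rfl fun m _ => ?_
  rw [ww_eq (mem_Gs.1 hA)]
  simp

theorem sum_ww_le {A : Matrix (Fin N) (Fin N) ℝ} (h : IsAdjMat N d A) (i : Fin N) :
    ∑ k, ∑ l, ∑ m, ww i A k l m ≤ N * d ^ 2 := by
  classical
  calc _ ≤ ∑ k, ∑ l, ∑ m, A i k * A l m := by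
        refine Finset.sum_le_sum fun k _ => Finset.sum_le_sum fun l _ =>
          Finset.sum_le_sum fun m _ => ?_
        rw [ww_eq h]
        split_ifs with hV
        · rw [hV.1, hV.2.1]; norm_num
        · exact mul_nonneg (adj_nonneg h _ _) (adj_nonneg h _ _)
    _ = _ := by
        simp only [← Finset.mul_sum, h.2.2.2]
        simp only [Finset.sum_const, Finset.card_univ, Fintype.card_fin, nsmul_eq_mul,
          ← Finset.sum_mul, h.2.2.2]
        ring

theorem sum_Sx_le (i : Fin N) (g : Matrix (Fin N) (Fin N) ℝ → ℝ) (hg : ∀ A, 0 ≤ g A) :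
    ∑ x ∈ Sx N d i, g x.1 ≤ N * d ^ 2 * ∑ A ∈ Gs N d, g A := by
  rw [sum_Sx i (fun x => g x.1), Finset.mul_sum]
  refine Finset.sum_le_sum fun A hA => ?_
  simp only [← Finset.sum_mul]
  exact mul_le_mul_of_nonneg_right (sum_ww_le (mem_Gs.1 hA) i) (hg A)

theorem moment_step (hd : 1 ≤ d) (hN : 2 * d ≤ N) (h8 : 8 ≤ N) (i : Fin N) (n : ℕ) :
    ∑ A ∈ Gs N d, nn (vv N d i A) ^ (2 * (n + 1)) ≤
      256 * (n + 1) * d ^ 2 * ∑ A ∈ Gs N d, nn (vv N d i A) ^ (2 * n) := by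
  set t : Matrix (Fin N) (Fin N) ℝ → ℝ := fun A => nn (vv N d i A) with ht
  have t0 : ∀ A, 0 ≤ t A := fun A => nn_nonneg _
  set φ : SwT N → ℝ := fun x => t x.1 ^ (2 * n) *
    (vv N d i x.1 ⬝ᵥ (x.1 *ᵥ (Pi.single x.2.1 1 - Pi.single x.2.2.1 1))) with hφ
  have hd' : (1:ℝ) ≤ d := by exact_mod_cast hd
  have h8' : (8:ℝ) ≤ N := by exact_mod_cast h8
  -- lower bound
  have lower : ∑ A ∈ Gs N d, t A ^ (2 * n) * (d * N / 4 * t A ^ 2 - d ^ 2 * N * t A) ≤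
      ∑ x ∈ Sx N d i, φ x := by
    rw [sum_Sx]
    refine Finset.sum_le_sum fun A hA => ?_
    have := mul_le_mul_of_nonneg_left (drift_lower (mem_Gs.1 hA) hd hN h8 i)
      (pow_nonneg (t0 A) (2 * n))
    refine this.trans (le_of_eq ?_)
    simp only [Finset.mul_sum, hφ]
    exact Finset.sum_congr rfl fun k _ => Finset.sum_congr rfl fun l _ =>
      Finset.sum_congr rfl fun m _ => by ring
  have upper : 2 * ∑ x ∈ Sx N d i, φ x ≤
      ((2 * n + 1) * 24 * d) * (N * d ^ 2 * ∑ A ∈ Gs N d, t A ^ (2 * n))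
        + 4 * (N * d ^ 2 * ∑ A ∈ Gs N d, t A ^ (2 * n + 1)) := by
    have e1 : 2 * ∑ x ∈ Sx N d i, φ x = ∑ x ∈ Sx N d i, (φ x + φ (tau i x)) := by
      rw [Finset.sum_add_distrib, exch]; ring
    have e2 : ∑ x ∈ Sx N d i, (φ x + φ (tau i x)) ≤ ∑ x ∈ Sx N d i,
        ((2 * n + 1) * 12 * d * (t x.1 ^ (2 * n) + t (tau i x).1 ^ (2 * n))
          + 4 * t (tau i x).1 ^ (2 * n + 1)) := by
      refine Finset.sum_le_sum fun x hx => ?_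
      rw [mem_Sx] at hx
      have := switch_bound hx.1 hd hx.2 (2 * n)
      push_cast at this
      exact this
    have e3 : ∑ x ∈ Sx N d i,
        ((2 * n + 1) * 12 * d * (t x.1 ^ (2 * n) + t (tau i x).1 ^ (2 * n))
          + 4 * t (tau i x).1 ^ (2 * n + 1)) =
        ((2 * n + 1) * 24 * d) * ∑ x ∈ Sx N d i, t x.1 ^ (2 * n)
          + 4 * ∑ x ∈ Sx N d i, t x.1 ^ (2 * n + 1) := by
      rw [Finset.sum_add_distrib, ← Finset.mul_sum, ← Finset.mul_sum, Finset.sum_add_distrib,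
        exch i (fun x => t x.1 ^ (2 * n)), exch i (fun x => t x.1 ^ (2 * n + 1))]
      ring
    rw [e1]
    refine e2.trans ?_
    rw [e3]
    have f1 := sum_Sx_le (d := d) i (fun A => t A ^ (2 * n)) (fun A => pow_nonneg (t0 A) _)
    have f2 := sum_Sx_le (d := d) i (fun A => t A ^ (2 * n + 1)) (fun A => pow_nonneg (t0 A) _)
    gcongr
  have pt : ∀ A, t A ^ (2 * n + 1) * d ≤ t A ^ (2 * (n + 1)) / 32 + 8 * d ^ 2 * t A ^ (2 * n) := by
    intro A
    have e1 : t A ^ (2 * n + 1) = t A ^ (2 * n) * t A := pow_succ _ _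
    have e2 : t A ^ (2 * (n + 1)) = t A ^ (2 * n) * t A ^ 2 := by rw [← pow_add]; ring
    rw [e1, e2]
    have q : t A * d ≤ t A ^ 2 / 32 + 8 * d ^ 2 := by nlinarith [sq_nonneg (t A - 16 * d)]
    have := mul_le_mul_of_nonneg_left q (pow_nonneg (t0 A) (2 * n))
    linarith
  have ptS : (∑ A ∈ Gs N d, t A ^ (2 * n + 1)) * d ≤ (∑ A ∈ Gs N d, t A ^ (2 * (n + 1))) / 32
      + 8 * d ^ 2 * ∑ A ∈ Gs N d, t A ^ (2 * n) := by
    rw [Finset.sum_mul, Finset.sum_div, Finset.mul_sum, ← Finset.sum_add_distrib]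
    exact Finset.sum_le_sum fun A _ => pt A
  have lowS : ∑ A ∈ Gs N d, t A ^ (2 * n) * (d * N / 4 * t A ^ 2 - d ^ 2 * N * t A) =
      d * N / 4 * (∑ A ∈ Gs N d, t A ^ (2 * (n + 1)))
        - d ^ 2 * N * ∑ A ∈ Gs N d, t A ^ (2 * n + 1) := by
    rw [Finset.mul_sum, Finset.mul_sum, ← Finset.sum_sub_distrib]
    exact Finset.sum_congr rfl fun A _ => by ring
  rw [lowS] at lower
  set S2 := ∑ A ∈ Gs N d, t A ^ (2 * (n + 1))
  set S1 := ∑ A ∈ Gs N d, t A ^ (2 * n + 1)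
  set S0 := ∑ A ∈ Gs N d, t A ^ (2 * n)
  have S00 : 0 ≤ S0 := Finset.sum_nonneg fun A _ => pow_nonneg (t0 A) _
  have key : (d * N : ℝ) * (S2 / 4) ≤
      (d * N : ℝ) * ((2 * n + 1) * 12 * d ^ 2 * S0 + 3 * (S1 * d)) := by
    nlinarith
  have key2 := le_of_mul_le_mul_left key (by positivity)
  nlinarith [mul_nonneg (sq_nonneg (d:ℝ)) S00, mul_nonneg (mul_nonneg (Nat.cast_nonneg n : (0:ℝ) ≤ n) (sq_nonneg (d:ℝ))) S00]

theorem moment (hd : 1 ≤ d) (hN : 2 * d ≤ N) (h8 : 8 ≤ N) (i : Fin N) (n : ℕ) :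
    ∑ A ∈ Gs N d, nn (vv N d i A) ^ (2 * n) ≤
      256 ^ n * n.factorial * d ^ (2 * n) * (Gs N d).card := by
  induction n with
  | zero => simp
  | succ n ih =>
    refine (moment_step hd hN h8 i n).trans ?_
    calc _ ≤ 256 * (n + 1) * (d:ℝ) ^ 2 *
          (256 ^ n * n.factorial * d ^ (2 * n) * (Gs N d).card) := by gcongr
      _ = _ := by rw [Nat.factorial_succ]; push_cast; ring

theorem row_sum_bound {A : Matrix (Fin N) (Fin N) ℝ} (h : IsAdjMat N d A) (i : Fin N) (s : ℕ) :
    ∑ j, |(A ^ (s + 2)) i j - (d:ℝ) ^ (s + 2) / N| ≤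
      d ^ s * (Real.sqrt N * nn (vv N d i A)) := by
  induction s with
  | zero =>
    simp only [zero_add, pow_zero, one_mul]
    have e : ∑ j, |(A ^ 2) i j - (d:ℝ) ^ 2 / N| = (fun _ => (1:ℝ)) ⬝ᵥ (fun j => |vv N d i A j|) := by
      simp [dotProduct, vv_apply h]
    rw [e]
    refine (le_abs_self _).trans ((nn_cs _ _).trans (le_of_eq ?_))
    have a1 : nn (fun _ : Fin N => (1:ℝ)) = Real.sqrt N := by
      rw [← Real.sqrt_sq (nn_nonneg _), nn_sq]; simp [dotProduct]
    have a2 : nn (fun j => |vv N d i A j|) = nn (vv N d i A) := by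
      rw [← Real.sqrt_sq (nn_nonneg _), nn_sq, ← Real.sqrt_sq (nn_nonneg (vv N d i A)), nn_sq]
      simp [dotProduct]
    rw [a1, a2]
  | succ s ih =>
    have hw : ∀ j, (A ^ (s + 1 + 2)) i j - (d:ℝ) ^ (s + 1 + 2) / N =
        ∑ x, ((A ^ (s + 2)) i x - (d:ℝ) ^ (s + 2) / N) * A x j := by
      intro j
      have : s + 1 + 2 = (s + 2) + 1 := by ring
      rw [this, pow_succ A, Matrix.mul_apply]
      simp only [sub_mul, Finset.sum_sub_distrib, ← Finset.mul_sum, adj_col h]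
      ring
    calc _ ≤ ∑ j, ∑ x, |(A ^ (s + 2)) i x - (d:ℝ) ^ (s + 2) / N| * A x j := by
          refine Finset.sum_le_sum fun j _ => ?_
          rw [hw]
          refine (Finset.abs_sum_le_sum_abs _ _).trans (le_of_eq ?_)
          exact Finset.sum_congr rfl fun x _ => by rw [abs_mul, abs_of_nonneg (adj_nonneg h x j)]
      _ = d * ∑ x, |(A ^ (s + 2)) i x - (d:ℝ) ^ (s + 2) / N| := by
          rw [Finset.sum_comm, Finset.mul_sum]
          refine Finset.sum_congr rfl fun x _ => ?_
          rw [← Finset.mul_sum, h.2.2.2]; ring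
      _ ≤ d * (d ^ s * (Real.sqrt N * nn (vv N d i A))) := by gcongr
      _ = _ := by ring

end lemmasC

/-- Large deviation estimate for the rows of powers of `𝒜`. -/
theorem power_row_large_deviation
    (r : ℕ) (hr : 2 ≤ r) (ε D : ℝ) (hε : 0 < ε) (hD : 0 < D) :
    ∃ N₀ : ℕ, ∀ N, N₀ ≤ N → ∀ d : ℕ, 1 ≤ d → 2 * d ≤ N → Even (d * N) → ∀ i : Fin N,
      PrReg N d (fun A =>
        (N : ℝ) ^ ε * ((d : ℝ) ^ (r - 1) * Real.sqrt N) ≤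
          ∑ j, |(A ^ r) i j - (d : ℝ) ^ r / (N : ℝ)|) ≤
        (N : ℝ) ^ (-D) := by
  classical
  obtain ⟨s, rfl⟩ : ∃ s, r = s + 2 := ⟨r - 2, by omega⟩
  obtain ⟨p, hp⟩ := exists_nat_ge ((D + 1) / (2 * ε))
  have hp' : D + 1 ≤ 2 * ε * p := by
    rw [div_le_iff₀ (by positivity)] at hp; linarith
  set K : ℝ := 256 ^ p * p.factorial with hK
  obtain ⟨N1, hN1⟩ := exists_nat_ge K
  refine ⟨max 8 N1, fun N hN d hd hdN _ i => ?_⟩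
  have h8 : 8 ≤ N := le_trans (le_max_left _ _) hN
  have hKN : K ≤ N := hN1.trans (by exact_mod_cast le_trans (le_max_right _ _) hN)
  have hN0 : (0:ℝ) < N := by exact_mod_cast (by omega : 0 < N)
  have hN1' : (1:ℝ) ≤ N := by exact_mod_cast (by omega : 1 ≤ N)
  have hd0 : (0:ℝ) < d := by exact_mod_cast hd
  have hm := moment hd hdN h8 i p
  have c2 : Nat.card {A : Matrix (Fin N) (Fin N) ℝ // IsAdjMat N d A} = (Gs N d).card :=
    Nat.subtype_card _ fun A => mem_Gs
  unfold PrReg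
  set E : Matrix (Fin N) (Fin N) ℝ → Prop := fun A =>
        (N : ℝ) ^ ε * ((d : ℝ) ^ (s + 2 - 1) * Real.sqrt N) ≤
          ∑ j, |(A ^ (s + 2)) i j - (d : ℝ) ^ (s + 2) / (N : ℝ)| with hE
  have c1 : Nat.card {A : Matrix (Fin N) (Fin N) ℝ // IsAdjMat N d A ∧ E A}
      = ((Gs N d).filter E).card :=
    Nat.subtype_card _ fun A => by rw [Finset.mem_filter, mem_Gs]
  rw [c1, c2]
  refine div_le_of_le_mul₀ (by positivity) (by positivity) ?_
  have ev : ∀ A ∈ (Gs N d).filter E, (N : ℝ) ^ ε * d ≤ nn (vv N d i A) := by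
    intro A hA
    rw [Finset.mem_filter, mem_Gs] at hA
    have h1 := hA.2.trans (row_sum_bound hA.1 i s)
    have e : s + 2 - 1 = s + 1 := by omega
    rw [e, pow_succ] at h1
    have q : 0 < (d:ℝ) ^ s * Real.sqrt N := by positivity
    refine le_of_mul_le_mul_left ?_ q
    linarith
  have mk : (((Gs N d).filter E).card : ℝ) * ((N : ℝ) ^ ε * d) ^ (2 * p) ≤
      ∑ A ∈ Gs N d, nn (vv N d i A) ^ (2 * p) := by
    calc _ = ∑ A ∈ (Gs N d).filter E, ((N : ℝ) ^ ε * d) ^ (2 * p) := by simp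
      _ ≤ ∑ A ∈ (Gs N d).filter E, nn (vv N d i A) ^ (2 * p) :=
          Finset.sum_le_sum fun A hA => pow_le_pow_left₀ (by positivity) (ev A hA) _
      _ ≤ _ := Finset.sum_le_sum_of_subset_of_nonneg (Finset.filter_subset _ _)
          fun A _ _ => pow_nonneg (nn_nonneg _) _
  have m2 := mk.trans hm
  rw [← hK, mul_pow] at m2
  have hNp : (N:ℝ) ^ (D + 1) ≤ ((N:ℝ) ^ ε) ^ (2 * p) := by
    rw [← Real.rpow_natCast, ← Real.rpow_mul hN0.le]
    refine Real.rpow_le_rpow_of_exponent_le hN1' ?_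
    push_cast; linarith
  have hdp : (0:ℝ) < (d:ℝ) ^ (2 * p) := by positivity
  have m3 : (((Gs N d).filter E).card : ℝ) * ((N : ℝ) ^ ε) ^ (2 * p) ≤ K * (Gs N d).card := by
    refine le_of_mul_le_mul_right ?_ hdp
    linarith
  have m4 : (((Gs N d).filter E).card : ℝ) * (N:ℝ) ^ (D + 1) ≤ N * (Gs N d).card := by
    refine le_trans ?_ (m3.trans ?_) <;> gcongr
  rw [Real.rpow_add hN0, Real.rpow_one] at m4
  have hND : (0:ℝ) < (N:ℝ) ^ D := by positivity
  have m5 : (((Gs N d).filter E).card : ℝ) * (N:ℝ) ^ D ≤ (Gs N d).card := by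
    refine le_of_mul_le_mul_right ?_ hN0
    linarith
  rw [Real.rpow_neg hN0.le, inv_mul_eq_div, le_div_iff₀ hND]
  exact m5

end
end

section
/- Let 𝒜 be drawn from the uniform probability measure on the set of adjacency matrices of d-regular graphs on N vertices (assumed nonempty), let i, j, k, l ∈ {1,…,N} be distinct indices, and let F be any real-valued function on symmetric N×N matrices. Then E[ F(𝒜) χ_{ij}^{kl}(𝒜) ] = E[ F(𝒜 + ξ_{ij}^{kl}) χ_{ik}^{jl}(𝒜) ]. -/
open MeasureTheory Filter Matrix
open scoped ENNReal NNReal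

noncomputable section

theorem xiMat_apply' (N : ℕ) (i j k l x y : Fin N) : xiMat N i j k l x y =
    ((if i = x ∧ j = y then (1 : ℝ) else 0) + (if i = y ∧ j = x then (1 : ℝ) else 0))
    + ((if k = x ∧ l = y then (1 : ℝ) else 0) + (if k = y ∧ l = x then (1 : ℝ) else 0))
    - ((if i = x ∧ k = y then (1 : ℝ) else 0) + (if i = y ∧ k = x then (1 : ℝ) else 0))
    - ((if j = x ∧ l = y then (1 : ℝ) else 0) + (if j = y ∧ l = x then (1 : ℝ) else 0)) := rfl

theorem Dmat_rowsum (N : ℕ) (i j x : Fin N) :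
    ∑ y, Dmat N i j x y = (if i = x then (1 : ℝ) else 0) + (if j = x then (1 : ℝ) else 0) := by
  simp only [Dmat, Matrix.of_apply, Finset.sum_add_distrib]
  congr 1
  · by_cases h : i = x <;> simp [h]
  · by_cases h : j = x <;> simp [h]

theorem xiMat_rowsum (N : ℕ) (i j k l x : Fin N) : ∑ y, xiMat N i j k l x y = 0 := by
  simp only [xiMat, Matrix.add_apply, Matrix.sub_apply, Finset.sum_add_distrib,
    Finset.sum_sub_distrib, Dmat_rowsum]
  ring

theorem xiMat_swap (N : ℕ) (i j k l : Fin N) : xiMat N i k j l = - xiMat N i j k l := by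
  simp only [xiMat]; abel

theorem switch_step (N d : ℕ) (i j k l : Fin N) (hij : i ≠ j) (hik : i ≠ k) (hil : i ≠ l)
    (hjk : j ≠ k) (hjl : j ≠ l) (hkl : k ≠ l) (A : Matrix (Fin N) (Fin N) ℝ)
    (hA : IsAdjMat N d A) (hc : chi N A i k j l ≠ 0) :
    IsAdjMat N d (A + xiMat N i j k l) ∧ chi N A i k j l = 1 ∧
      chi N (A + xiMat N i j k l) i j k l = 1 := by
  obtain ⟨hs, h0, h01, hr⟩ := hA
  have hs' : ∀ x y, A x y = A y x := fun x y => hs.apply y x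
  have e1 : A i k = 1 := by
    rcases h01 i k with h | h
    · exact absurd (by simp [chi, h]) hc
    · exact h
  have e2 : A i j = 0 := by
    rcases h01 i j with h | h
    · exact h
    · exact absurd (by simp [chi, h]) hc
  have e3 : A j l = 1 := by
    rcases h01 j l with h | h
    · exact absurd (by simp [chi, h]) hc
    · exact h
  have e4 : A k l = 0 := by
    rcases h01 k l with h | h
    · exact h
    · exact absurd (by simp [chi, h]) hc
  have f1 := (hs' k i).trans e1
  have f2 := (hs' j i).trans e2
  have f3 := (hs' l j).trans e3
  have f4 := (hs' l k).trans e4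
  refine ⟨⟨?_, ?_, ?_, ?_⟩, ?_, ?_⟩
  · apply Matrix.IsSymm.ext
    intro x y
    rw [Matrix.add_apply, Matrix.add_apply, hs' y x, xiMat_apply', xiMat_apply']
    ring
  · intro x
    rw [Matrix.add_apply, h0, xiMat_apply']
    have g : ∀ a b : Fin N, a ≠ b → ¬ (a = x ∧ b = x) := by
      rintro a b h ⟨rfl, rfl⟩; exact h rfl
    simp [g i j hij, g k l hkl, g i k hik, g j l hjl]
  · intro x y
    rw [Matrix.add_apply, xiMat_apply']
    by_cases c1 : i = x ∧ j = y
    · obtain ⟨rfl, rfl⟩ := c1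
      simp [*, hij.symm, hik.symm, hil.symm, hjk.symm, hjl.symm, hkl.symm]
    by_cases c2 : i = y ∧ j = x
    · obtain ⟨rfl, rfl⟩ := c2
      simp [*, hij.symm, hik.symm, hil.symm, hjk.symm, hjl.symm, hkl.symm]
    by_cases c3 : k = x ∧ l = y
    · obtain ⟨rfl, rfl⟩ := c3
      simp [*, hij.symm, hik.symm, hil.symm, hjk.symm, hjl.symm, hkl.symm]
    by_cases c4 : k = y ∧ l = x
    · obtain ⟨rfl, rfl⟩ := c4
      simp [*, hij.symm, hik.symm, hil.symm, hjk.symm, hjl.symm, hkl.symm]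
    by_cases c5 : i = x ∧ k = y
    · obtain ⟨rfl, rfl⟩ := c5
      simp [*, hij.symm, hik.symm, hil.symm, hjk.symm, hjl.symm, hkl.symm]
    by_cases c6 : i = y ∧ k = x
    · obtain ⟨rfl, rfl⟩ := c6
      simp [*, hij.symm, hik.symm, hil.symm, hjk.symm, hjl.symm, hkl.symm]
    by_cases c7 : j = x ∧ l = y
    · obtain ⟨rfl, rfl⟩ := c7
      simp [*, hij.symm, hik.symm, hil.symm, hjk.symm, hjl.symm, hkl.symm]
    by_cases c8 : j = y ∧ l = x
    · obtain ⟨rfl, rfl⟩ := c8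
      simp [*, hij.symm, hik.symm, hil.symm, hjk.symm, hjl.symm, hkl.symm]
    rw [if_neg c1, if_neg c2, if_neg c3, if_neg c4, if_neg c5, if_neg c6, if_neg c7, if_neg c8]
    simpa using h01 x y
  · intro x
    simp only [Matrix.add_apply, Finset.sum_add_distrib, xiMat_rowsum, hr, add_zero]
  · simp [chi, e1, e2, e3, e4]
  · simp only [chi, Matrix.add_apply, xiMat_apply', e1, e2, e3, e4]
    simp [*, hij.symm, hik.symm, hil.symm, hjk.symm, hjl.symm, hkl.symm]

open Classical in
theorem finsum_adj (N d : ℕ) (G : Matrix (Fin N) (Fin N) ℝ → ℝ) :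
    (∑ᶠ A : {A : Matrix (Fin N) (Fin N) ℝ // IsAdjMat N d A}, G A.1) =
      ∑ᶠ A : Matrix (Fin N) (Fin N) ℝ, if IsAdjMat N d A then G A else 0 := by
  rw [finsum_subtype_eq_finsum_cond (f := G) (fun A => IsAdjMat N d A)]
  congr 1
  ext A
  exact finsum_eq_if

/-- Invariance of the uniform measure on `d`-regular graphs under local switchings. -/
theorem switching_invariance
    (N d : ℕ) (hd : 1 ≤ d) (hdN : d < N)
    (hne : Nonempty {A : Matrix (Fin N) (Fin N) ℝ // IsAdjMat N d A})
    (i j k l : Fin N) (hij : i ≠ j) (hik : i ≠ k) (hil : i ≠ l)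
    (hjk : j ≠ k) (hjl : j ≠ l) (hkl : k ≠ l)
    (F : Matrix (Fin N) (Fin N) ℝ → ℝ) :
    Ereg N d (fun A => F A * chi N A i j k l) =
      Ereg N d (fun A => F (A + xiMat N i j k l) * chi N A i k j l) := by
  classical
  unfold Ereg
  congr 1
  rw [finsum_adj N d (fun A => F A * chi N A i j k l),
    finsum_adj N d (fun A => F (A + xiMat N i j k l) * chi N A i k j l),
    ← finsum_comp_equiv (Equiv.addRight (xiMat N i j k l))]
  congr 1
  ext A
  change (if IsAdjMat N d (A + xiMat N i j k l) then
      F (A + xiMat N i j k l) * chi N (A + xiMat N i j k l) i j k l else 0) =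
    if IsAdjMat N d A then F (A + xiMat N i j k l) * chi N A i k j l else 0
  have key := switch_step N d i j k l hij hik hil hjk hjl hkl A
  have key' := switch_step N d i k j l hik hij hil hjk.symm hkl hjl (A + xiMat N i j k l)
  rw [xiMat_swap N i j k l, add_neg_cancel_right] at key'
  by_cases h1 : IsAdjMat N d A ∧ chi N A i k j l ≠ 0
  · obtain ⟨a, b, c⟩ := key h1.1 h1.2
    rw [if_pos a, if_pos h1.1, b, c]
  · by_cases h2 : IsAdjMat N d (A + xiMat N i j k l) ∧
        chi N (A + xiMat N i j k l) i j k l ≠ 0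
    · obtain ⟨a, b, c⟩ := key' h2.1 h2.2
      exact absurd ⟨a, by rw [c]; exact one_ne_zero⟩ h1
    · have r1 : (if IsAdjMat N d A then
          F (A + xiMat N i j k l) * chi N A i k j l else 0) = 0 := by
        split_ifs with h
        · have : chi N A i k j l = 0 := by
            by_contra h'
            exact h1 ⟨h, h'⟩
          rw [this, mul_zero]
        · rfl
      have r2 : (if IsAdjMat N d (A + xiMat N i j k l) then
          F (A + xiMat N i j k l) * chi N (A + xiMat N i j k l) i j k l else 0) = 0 := by
        split_ifs with h
        · have : chi N (A + xiMat N i j k l) i j k l = 0 := by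
            by_contra h'
            exact h2 ⟨h, h'⟩
          rw [this, mul_zero]
        · rfl
      rw [r1, r2]

end
end
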